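/- Let λ, μ ∈ P_n and let m ≥ λ'_1, μ'_1, with N = n + m. Then d_{λ,n}^μ(y) = (−1)^{|λ|+|μ|} · det(A_{I_{μ^c}, I_{λ^c}}), where A = ( e_{i−j}(y_1,…,y_i) )_{0≤i,j≤N−1}, and A_{I,J} denotes the n×n (respectively m×m) submatrix of A with row index set I and column index set J listed in increasing order. -/

import Mathlib

open Finset MvPolynomial

attribute [local instance] Classical.propDecidable

/-- A partition in `P_n`: a weakly decreasing sequence of naturals. -/
def IsPartition {n : ℕ} (lam : Fin n → ℕ) : Prop := Antitone lam

/-- The cells of the Young diagram of `lam`, as pairs (row, column), 0-based. -/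
noncomputable def cells {n : ℕ} (lam : Fin n → ℕ) : Finset (Fin n × ℕ) :=
  (Finset.univ ×ˢ Finset.range (Finset.univ.sup lam)).filter fun c => c.2 < lam c.1

/-- Semistandardness for a filling with values in `Fin n` (0-based values):
rows weakly increase, columns strictly increase. -/
def IsSSYT {n : ℕ} (lam : Fin n → ℕ) (T : cells lam → Fin n) : Prop :=
  (∀ c d : cells lam, (c : Fin n × ℕ).1 = (d : Fin n × ℕ).1 →
      (c : Fin n × ℕ).2 ≤ (d : Fin n × ℕ).2 → T c ≤ T d) ∧
  (∀ c d : cells lam, (c : Fin n × ℕ).2 = (d : Fin n × ℕ).2 →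
      (c : Fin n × ℕ).1 < (d : Fin n × ℕ).1 → T c < T d)

/-- The y-subscript `a + c(a) - r(a)` of a cell (1-based value and coordinates). -/
def ysub {n : ℕ} (a : Fin n) (c : Fin n × ℕ) : ℤ := (a : ℤ) + 1 + (c.2 : ℤ) - ((c.1 : ℕ) : ℤ)

/-- The Schur polynomial `s_lam(x_{(n)})`, in the ring with `x`-variables
`Sum.inl i` and `y`-variables `Sum.inr k` (`y_k` for `k ≥ 1`). -/
noncomputable def schurN (n : ℕ) (lam : Fin n → ℕ) : MvPolynomial (Fin n ⊕ ℤ) ℤ :=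
  ∑ T ∈ Finset.univ.filter (IsSSYT lam), ∏ c : cells lam, X (Sum.inl (T c))

/-- The factorial Schur polynomial `s_lam(x_{(n)} | y)`. -/
noncomputable def factSchurN (n : ℕ) (lam : Fin n → ℕ) : MvPolynomial (Fin n ⊕ ℤ) ℤ :=
  ∑ T ∈ Finset.univ.filter (IsSSYT lam),
    ∏ c : cells lam,
      (X (Sum.inl (T c)) + X (Sum.inr (ysub (T c) (c : Fin n × ℕ))))

/-- `e_d(y_1, …, y_p)`, the elementary symmetric polynomial in the variables
`y_1, …, y_p` (which is `0` for `d < 0` and for `d > p`, and `1` for `d = 0`),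
as a polynomial in the variables `y_k`, `k : ℤ`. -/
noncomputable def eY (p : ℕ) (d : ℤ) : MvPolynomial ℤ ℤ :=
  if 0 ≤ d then
    ∑ s ∈ Finset.powersetCard d.toNat ((Finset.range p).image fun k => (k + 1 : ℤ)),
      ∏ j ∈ s, X j
  else 0

/-- `h_d(-y_1, …, -y_p)`, the complete homogeneous symmetric polynomial of degree
`d` evaluated at the negated variables `-y_1, …, -y_p` (and `0` for `d < 0`). -/
noncomputable def hYneg (p : ℕ) (d : ℤ) : MvPolynomial ℤ ℤ :=
  if 0 ≤ d then
    ∑ m ∈ (Finset.range p).sym d.toNat,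
      ((m : Multiset ℕ).map fun k => -(X (k + 1 : ℤ) : MvPolynomial ℤ ℤ)).prod
  else 0

/-- The partition `λ^c ∈ P_m` complementary to `λ ∈ P_n` in the `n × m` rectangle:
`λ^c_i = n - λ'_{m+1-i}` (1-based), where `λ'_j = #{k : λ_k ≥ j}` is the conjugate. -/
noncomputable def conjComp (n m : ℕ) (lam : Fin n → ℕ) : Fin m → ℕ :=
  fun i => n - (Finset.univ.filter fun k : Fin n => m - (i : ℕ) ≤ lam k).card

/-- factorial power -/
noncomputable def fpw {R : Type*} [CommRing R] (y : ℤ → R) (k : ℕ) (z : R) : R :=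
  ∏ t ∈ Finset.range k, (z + y ((t : ℤ) + 1))

theorem fpw_succ {R : Type*} [CommRing R] (y : ℤ → R) (k : ℕ) (z : R) :
    fpw y (k+1) z = fpw y k z * (z + y ((k : ℤ) + 1)) := by
  simp [fpw, Finset.prod_range_succ]

theorem fpw_tele {R : Type*} [CommRing R] (y : ℤ → R) (a b : ℕ) (hab : a ≤ b) (w z : R) :
    fpw y b w - (∏ t ∈ Finset.Ico a b, (z + y ((t : ℤ) + 1))) * fpw y a w =
      (∑ l ∈ Finset.Ico a b, (∏ t ∈ Finset.Ico (l+1) b, (z + y ((t : ℤ) + 1))) * fpw y l w)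
        * (w - z) := by
  induction b, hab using Nat.le_induction with
  | base => simp
  | succ b hab ih =>
    rw [Finset.prod_Ico_succ_top hab, Finset.sum_Ico_succ_top hab, fpw_succ]
    have : ∑ l ∈ Finset.Ico a b, (∏ t ∈ Finset.Ico (l+1) (b+1), (z + y ((t : ℤ) + 1))) * fpw y l w
        = (∑ l ∈ Finset.Ico a b, (∏ t ∈ Finset.Ico (l+1) b, (z + y ((t : ℤ) + 1))) * fpw y l w)
          * (z + y ((b : ℤ) + 1)) := by
      rw [Finset.sum_mul]
      refine Finset.sum_congr rfl fun l hl => ?_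
      rw [Finset.prod_Ico_succ_top (by simp at hl; omega)]
      ring
    rw [this]
    simp only [Finset.Ico_self, Finset.prod_empty]
    linear_combination (z + y ((b : ℤ) + 1)) * ih

theorem fpw_split {R : Type*} [CommRing R] (y : ℤ → R) (a b : ℕ) (hab : a ≤ b) (z : R) :
    fpw y b z = (∏ t ∈ Finset.Ico a b, (z + y ((t : ℤ) + 1))) * fpw y a z := by
  have := fpw_tele y a b hab z z
  simp only [sub_self, mul_zero] at this
  exact sub_eq_zero.mp this

theorem det_branch_aux {R : Type*} [CommRing R] (y : ℤ → R) (n : ℕ) (k : Fin (n+1) → ℕ)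
    (hk : ∀ i : Fin n, k i.castSucc ≤ k i.succ) (x : Fin (n+1) → R) :
    Matrix.det (Matrix.of fun i j => fpw y (k i) (x j)) =
      fpw y (k 0) (x 0) * ((∏ j : Fin n, (x j.succ - x 0)) *
        Matrix.det (Matrix.of fun i j : Fin n =>
          ∑ l ∈ Finset.Ico (k i.castSucc) (k i.succ),
            (∏ t ∈ Finset.Ico (l+1) (k i.succ), (x 0 + y ((t : ℤ) + 1))) * fpw y l (x j.succ))) := by
  let c : Fin n → R := fun i =>
    ∏ t ∈ Finset.Ico (k i.castSucc) (k i.succ), (x 0 + y ((t : ℤ) + 1))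
  let B : Matrix (Fin (n+1)) (Fin (n+1)) R := Matrix.of fun i j =>
    Fin.cases (fpw y (k 0) (x j))
      (fun i => fpw y (k i.succ) (x j) - c i * fpw y (k i.castSucc) (x j)) i
  rw [Matrix.det_eq_of_forall_row_eq_smul_add_pred (B := B) c]
  · rw [Matrix.det_succ_column_zero, Fin.sum_univ_succ]
    rw [Finset.sum_eq_zero]
    · simp only [Fin.val_zero, pow_zero, one_mul, add_zero]
      rw [← Matrix.det_mul_row]
      congr 1
      congr 1
      ext i j
      simp only [B, Matrix.submatrix_apply, Matrix.of_apply, Fin.zero_succAbove, Fin.cases_succ]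
      rw [fpw_tele _ _ _ (hk i) _ (x 0), mul_comm]
    · intro i _
      simp only [B, Matrix.of_apply, Fin.cases_succ]
      rw [fpw_split y _ _ (hk i) (x 0), sub_self]
      simp
  · intro j
    simp [B]
  · intro i j
    simp [B]

theorem det_branch {R : Type*} [CommRing R] (y : ℤ → R) (n : ℕ) (k : Fin (n+1) → ℕ)
    (hk : ∀ i : Fin n, k i.succ ≤ k i.castSucc) (x : Fin (n+1) → R) :
    Matrix.det (Matrix.of fun i j => fpw y (k i) (x j)) =
      fpw y (k (Fin.last n)) (x (Fin.last n)) * ((∏ j : Fin n, (x j.castSucc - x (Fin.last n))) *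
        Matrix.det (Matrix.of fun i j : Fin n =>
          ∑ l ∈ Finset.Ico (k i.succ) (k i.castSucc),
            (∏ t ∈ Finset.Ico (l+1) (k i.castSucc), (x (Fin.last n) + y ((t : ℤ) + 1)))
              * fpw y l (x j.castSucc))) := by
  have h := det_branch_aux y n (fun i => k i.rev) (fun i => by
    have := hk i.rev
    rw [Fin.rev_succ, Fin.rev_castSucc]
    exact this) (fun j => x j.rev)
  rw [← Matrix.det_submatrix_equiv_self Fin.revPerm (Matrix.of fun i j => fpw y (k i) (x j))]
  refine Eq.trans ?_ (h.trans ?_)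
  · rfl
  · simp only [Fin.rev_zero, Fin.rev_succ, Fin.rev_castSucc]
    congr 2
    · exact Equiv.prod_comp Fin.revPerm (fun j : Fin n => (x j.castSucc - x (Fin.last n)))
    · exact Matrix.det_submatrix_equiv_self Fin.revPerm (Matrix.of fun i j : Fin n =>
          ∑ l ∈ Finset.Ico (k i.succ) (k i.castSucc),
            (∏ t ∈ Finset.Ico (l+1) (k i.castSucc), (x (Fin.last n) + y ((t : ℤ) + 1)))
              * fpw y l (x j.castSucc))

theorem det_sum_expand {R : Type*} [CommRing R] (n : ℕ) (S : Fin n → Finset ℕ)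
    (g : Fin n → ℕ → R) (h : Fin n → ℕ → Fin n → R) :
    Matrix.det (Matrix.of fun i j : Fin n => ∑ v ∈ S i, g i v * h i v j) =
      ∑ ν ∈ Fintype.piFinset S, (∏ i, g i (ν i)) *
        Matrix.det (Matrix.of fun i j : Fin n => h i (ν i) j) := by
  have h1 := MultilinearMap.map_sum_finset
    (Matrix.detRowAlternating (R := R) (n := Fin n)).toMultilinearMap
    (fun i v => (fun j => g i v * h i v j)) S
  have h2 : (Matrix.of fun i j : Fin n => ∑ v ∈ S i, g i v * h i v j) =
     fun i => ∑ v ∈ S i, (fun j => g i v * h i v j) := by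
    ext i j
    simp [Finset.sum_apply]
  rw [h2]
  refine Eq.trans h1 (Finset.sum_congr rfl fun ν _ => ?_)
  rw [← Matrix.det_mul_column]
  rfl

theorem alt_branch {R : Type*} [CommRing R] (y : ℤ → R) (n : ℕ) (lam : Fin (n+1) → ℕ)
    (hl : Antitone lam) (x : Fin (n+1) → R) :
    Matrix.det (Matrix.of fun i j : Fin (n+1) => fpw y (lam i + (n - i)) (x j)) =
      (∏ j : Fin n, (x j.castSucc - x (Fin.last n))) *
      ∑ ν ∈ Fintype.piFinset (fun i : Fin n => Finset.Icc (lam i.succ) (lam i.castSucc)),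
        (fpw y (lam (Fin.last n)) (x (Fin.last n)) *
          ∏ i : Fin n, ∏ c ∈ Finset.Ico (ν i) (lam i.castSucc),
            (x (Fin.last n) + y ((n : ℤ) + 1 + c - (i : ℕ)))) *
        Matrix.det (Matrix.of fun i j : Fin n => fpw y (ν i + (n - 1 - i)) (x j.castSucc)) := by
  rw [det_branch y n (fun i => lam i + (n - i))]
  swap
  · intro i
    have := hl (Fin.castSucc_lt_succ (i := i)).le
    simp only [Fin.val_succ, Fin.val_castSucc]
    omega
  simp only [Fin.val_last, Nat.sub_self, add_zero, Fin.val_succ, Fin.val_castSucc]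
  have key : ∀ i j : Fin n, ∑ l ∈ Finset.Ico (lam i.succ + (n - (i + 1))) (lam i.castSucc + (n - i)),
            (∏ t ∈ Finset.Ico (l+1) (lam i.castSucc + (n - i)), (x (Fin.last n) + y ((t : ℤ) + 1)))
              * fpw y l (x j.castSucc) =
      ∑ v ∈ Finset.Icc (lam i.succ) (lam i.castSucc),
        (∏ c ∈ Finset.Ico v (lam i.castSucc),
            (x (Fin.last n) + y ((n : ℤ) + 1 + c - (i : ℕ)))) *
          fpw y (v + (n - 1 - i)) (x j.castSucc) := by
    intro i j
    have e1 : lam i.castSucc + (n - i) = (lam i.castSucc + 1) + (n - 1 - i) := by omega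
    have e2 : n - ((i:ℕ)+1) = n - 1 - i := by omega
    rw [e1, e2, ← Finset.sum_Ico_add']
    refine Finset.sum_congr (by ext; simp) fun v hv => ?_
    congr 1
    have e3 : v + (n - 1 - (i:ℕ)) + 1 = v + (n - i) := by omega
    rw [← e1, e3, ← Finset.prod_Ico_add']
    refine Finset.prod_congr rfl fun c _ => ?_
    congr 2
    have : (i:ℕ) < n := i.2
    push_cast [Nat.cast_sub this.le]
    ring
  simp only [key]
  rw [det_sum_expand n (fun i => Finset.Icc (lam i.succ) (lam i.castSucc))
    (fun i v => ∏ c ∈ Finset.Ico v (lam i.castSucc),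
            (x (Fin.last n) + y ((n : ℤ) + 1 + c - (i : ℕ))))
    (fun i v j => fpw y (v + (n - 1 - i)) (x j.castSucc))]
  rw [mul_left_comm, Finset.mul_sum]
  congr 1
  refine Finset.sum_congr rfl fun ν _ => ?_
  ring

theorem mem_cells_iff {n : ℕ} (lam : Fin n → ℕ) (i : Fin n) (c : ℕ) :
    (i, c) ∈ cells lam ↔ c < lam i := by
  simp only [cells, Finset.mem_filter, Finset.mem_product, Finset.mem_univ, Finset.mem_range,
    true_and, and_iff_right_iff_imp]
  intro h
  exact lt_of_lt_of_le h (Finset.le_sup (f := lam) (Finset.mem_univ i))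

theorem prod_cells {R : Type*} [CommRing R] {n : ℕ} (lam : Fin n → ℕ) (F : Fin n × ℕ → R) :
    ∏ c : cells lam, F c = ∏ i : Fin n, ∏ c ∈ Finset.range (lam i), F (i, c) := by
  rw [Finset.prod_coe_sort (cells lam) F, Finset.prod_sigma']
  refine Finset.prod_bij' (fun a _ => (⟨a.1, a.2⟩ : Σ _ : Fin n, ℕ)) (fun a _ => (a.1, a.2)) ?_ ?_ ?_ ?_ ?_
  · rintro ⟨i, c⟩ h
    simpa using (mem_cells_iff lam i c).1 h
  · rintro ⟨i, c⟩ h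
    exact (mem_cells_iff lam i c).2 (by simpa using h)
  · intros; rfl
  · intros; rfl
  · intros; rfl

/-- generic tableau sum -/
noncomputable def tabS {R : Type*} [CommRing R] (n : ℕ) (lam : Fin n → ℕ) (x : Fin n → R)
    (y : ℤ → R) : R :=
  ∑ T ∈ Finset.univ.filter (IsSSYT lam),
    ∏ c : cells lam, (x (T c) + y (ysub (T c) (c : Fin n × ℕ)))

/-- nu is the shape of the part of T with entries not last -/
def HasSub {n : ℕ} (lam : Fin (n+1) → ℕ) (T : cells lam → Fin (n+1)) (nu : Fin n → ℕ) : Prop :=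
  ∀ (i : Fin n) (c : ℕ) (h : (i.castSucc, c) ∈ cells lam),
    (T ⟨(i.castSucc, c), h⟩ ≠ Fin.last n ↔ c < nu i)

theorem lower_exists (L : ℕ) (p : ℕ → Prop) (hp : ∀ a b, a ≤ b → b < L → p b → p a) :
    ∃ v ≤ L, ∀ c < L, (p c ↔ c < v) := by
  induction L with
  | zero => exact ⟨0, le_rfl, fun c hc => absurd hc (by omega)⟩
  | succ L ih =>
    by_cases h : p L
    · exact ⟨L+1, le_rfl, fun c hc => ⟨fun _ => hc, fun _ => hp c L (by omega) (by omega) h⟩⟩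
    · obtain ⟨v, hv, hc⟩ := ih (fun a b hab hb => hp a b hab (by omega))
      refine ⟨v, by omega, fun c hcL => ?_⟩
      rcases Nat.lt_succ_iff_lt_or_eq.1 hcL with h1 | h1
      · exact hc c h1
      · subst h1
        exact ⟨fun h2 => absurd h2 h, fun h2 => by omega⟩

theorem hasSub_exists {n : ℕ} (lam : Fin (n+1) → ℕ) (hl : Antitone lam)
    (T : cells lam → Fin (n+1)) (hT : IsSSYT lam T) :
    ∃ nu ∈ Fintype.piFinset (fun i : Fin n => Finset.Icc (lam i.succ) (lam i.castSucc)),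
      HasSub lam T nu := by
  have h : ∀ i : Fin n, ∃ v ≤ lam i.castSucc, ∀ c < lam i.castSucc,
      ((∃ h : (i.castSucc, c) ∈ cells lam, T ⟨(i.castSucc, c), h⟩ ≠ Fin.last n) ↔ c < v) := by
    intro i
    apply lower_exists
    rintro a b hab hb ⟨h, hne⟩
    have ha := (mem_cells_iff lam i.castSucc a).2 (by omega)
    refine ⟨ha, ?_⟩
    have := hT.1 ⟨_, ha⟩ ⟨_, h⟩ rfl hab
    intro heq
    rw [heq] at this
    exact hne (le_antisymm (Fin.le_last _) this)
  choose nu h1 h2 using h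
  refine ⟨nu, ?_, ?_⟩
  · rw [Fintype.mem_piFinset]
    intro i
    rw [Finset.mem_Icc]
    refine ⟨?_, h1 i⟩
    by_contra hcon
    push Not at hcon
    have hle : lam i.succ ≤ lam i.castSucc := hl (Fin.castSucc_lt_succ (i := i)).le
    have ha := (mem_cells_iff lam i.succ (nu i)).2 hcon
    have hb := (mem_cells_iff lam i.castSucc (nu i)).2 (by omega)
    have := hT.2 ⟨_, hb⟩ ⟨_, ha⟩ rfl (Fin.castSucc_lt_succ (i := i))
    have h3 := (h2 i (nu i) (by omega)).1 ⟨hb, fun heq => by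
      rw [heq] at this
      exact absurd this (not_lt.2 (Fin.le_last _))⟩
    omega
  · intro i c h
    rw [← h2 i c ((mem_cells_iff _ _ _).1 h)]
    exact ⟨fun h3 => ⟨h, h3⟩, fun ⟨_, h3⟩ => h3⟩

theorem hasSub_unique {n : ℕ} (lam : Fin (n+1) → ℕ)
    (T : cells lam → Fin (n+1)) (nu nu' : Fin n → ℕ)
    (h1 : ∀ i, nu i ≤ lam i.castSucc) (h1' : ∀ i, nu' i ≤ lam i.castSucc)
    (h2 : HasSub lam T nu) (h2' : HasSub lam T nu') : nu = nu' := by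
  funext i
  by_contra hne
  rcases Nat.lt_or_gt_of_ne hne with h | h
  · have hm := (mem_cells_iff lam i.castSucc (nu i)).2 (by have := h1' i; omega)
    have := (h2 i _ hm).symm.trans (h2' i _ hm)
    omega
  · have hm := (mem_cells_iff lam i.castSucc (nu' i)).2 (by have := h1 i; omega)
    have := (h2 i _ hm).symm.trans (h2' i _ hm)
    omega

/-- column bound: the entries in row i are at least i -/
theorem ssyt_row_le {n : ℕ} (lam : Fin n → ℕ) (hl : Antitone lam)
    (T : cells lam → Fin n) (hT : IsSSYT lam T) (k : ℕ) :
    ∀ (hk : k < n) (c : ℕ) (h : ((⟨k, hk⟩ : Fin n), c) ∈ cells lam), k ≤ T ⟨_, h⟩ := by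
  induction k with
  | zero => intros; omega
  | succ k ih =>
    intro hk c h
    have h' : ((⟨k, by omega⟩ : Fin n), c) ∈ cells lam := by
      rw [mem_cells_iff] at h ⊢
      exact lt_of_lt_of_le h (hl (by simp [Fin.le_def]))
    have h1 := ih (by omega) c h'
    have h2 := hT.2 ⟨_, h'⟩ ⟨_, h⟩ rfl (by simp [Fin.lt_def])
    rw [Fin.lt_def] at h2
    omega

/-- inverse of restriction -/
noncomputable def extendT {n : ℕ} (lam : Fin (n+1) → ℕ) (nu : Fin n → ℕ)
    (T : cells nu → Fin n) : cells lam → Fin (n+1) := fun c =>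
  if h : ∃ h1 : (c : Fin (n+1) × ℕ).1 ≠ Fin.last n,
      ((c : Fin (n+1) × ℕ).1.castPred h1, (c : Fin (n+1) × ℕ).2) ∈ cells nu
  then (T ⟨_, h.2⟩).castSucc else Fin.last n

theorem extendT_of_mem {n : ℕ} (lam : Fin (n+1) → ℕ) (nu : Fin n → ℕ)
    (T : cells nu → Fin n) (i : Fin n) (c : ℕ) (h : (i.castSucc, c) ∈ cells lam)
    (h' : (i, c) ∈ cells nu) : extendT lam nu T ⟨_, h⟩ = (T ⟨_, h'⟩).castSucc := by
  unfold extendT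
  rw [dif_pos]
  · rfl
  · exact ⟨(Fin.castSucc_lt_last i).ne, by simpa using h'⟩

theorem extendT_of_not_mem {n : ℕ} (lam : Fin (n+1) → ℕ) (nu : Fin n → ℕ)
    (T : cells nu → Fin n) (i : Fin n) (c : ℕ) (h : (i.castSucc, c) ∈ cells lam)
    (h' : (i, c) ∉ cells nu) : extendT lam nu T ⟨_, h⟩ = Fin.last n := by
  unfold extendT
  rw [dif_neg]
  rintro ⟨h1, h2⟩
  exact h' (by simpa using h2)

theorem extendT_last {n : ℕ} (lam : Fin (n+1) → ℕ) (nu : Fin n → ℕ)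
    (T : cells nu → Fin n) (c : ℕ) (h : (Fin.last n, c) ∈ cells lam) :
    extendT lam nu T ⟨_, h⟩ = Fin.last n := by
  unfold extendT
  rw [dif_neg]
  rintro ⟨h1, h2⟩
  exact h1 rfl

theorem extendT_hasSub {n : ℕ} (lam : Fin (n+1) → ℕ) (nu : Fin n → ℕ)
    (T : cells nu → Fin n) : HasSub lam (extendT lam nu T) nu := by
  intro i c h
  by_cases h' : (i, c) ∈ cells nu
  · rw [extendT_of_mem lam nu T i c h h']
    exact ⟨fun _ => (mem_cells_iff _ _ _).1 h', fun _ => (Fin.castSucc_lt_last _).ne⟩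
  · rw [extendT_of_not_mem lam nu T i c h h']
    rw [mem_cells_iff] at h'
    simp [h']

theorem extendT_ssyt {n : ℕ} (lam : Fin (n+1) → ℕ) (nu : Fin n → ℕ)
    (hnu : nu ∈ Fintype.piFinset (fun i : Fin n => Finset.Icc (lam i.succ) (lam i.castSucc)))
    (T : cells nu → Fin n) (hl : Antitone lam) (hT : IsSSYT nu T) :
    IsSSYT lam (extendT lam nu T) := by
  simp only [Fintype.mem_piFinset, Finset.mem_Icc] at hnu
  constructor
  · rintro ⟨⟨i, c⟩, h⟩ ⟨⟨j, e⟩, h'⟩ hij hce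
    simp only at hij hce
    subst hij
    induction i using Fin.lastCases with
    | last => rw [extendT_last, extendT_last]
    | cast i =>
      by_cases he : (i, e) ∈ cells nu
      · have hc : (i, c) ∈ cells nu := by
          rw [mem_cells_iff] at he ⊢; omega
        rw [extendT_of_mem _ _ _ _ _ _ he, extendT_of_mem _ _ _ _ _ _ hc]
        exact Fin.castSucc_le_castSucc_iff.2 (hT.1 _ _ rfl hce)
      · rw [extendT_of_not_mem _ _ _ _ _ h' he]
        exact Fin.le_last _
  · rintro ⟨⟨i, c⟩, h⟩ ⟨⟨j, e⟩, h'⟩ hce hij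
    simp only at hij hce
    subst hce
    induction i using Fin.lastCases with
    | last => exact absurd hij (not_lt.2 (Fin.le_last _))
    | cast i =>
      have hc : (i, c) ∈ cells nu := by
        rw [mem_cells_iff] at h' ⊢
        have h1 : lam j ≤ lam i.succ := hl (by rw [Fin.lt_def] at hij; rw [Fin.le_def]; simpa using hij)
        have := (hnu i).1
        omega
      rw [extendT_of_mem _ _ _ _ _ _ hc]
      induction j using Fin.lastCases with
      | last => rw [extendT_last]; exact Fin.castSucc_lt_last _
      | cast j =>
        by_cases he : (j, c) ∈ cells nu
        · rw [extendT_of_mem _ _ _ _ _ _ he]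
          exact Fin.castSucc_lt_castSucc_iff.2 (hT.2 _ _ rfl (Fin.castSucc_lt_castSucc_iff.1 hij))
        · rw [extendT_of_not_mem _ _ _ _ _ h' he]
          exact Fin.castSucc_lt_last _

theorem cells_sub {n : ℕ} (lam : Fin (n+1) → ℕ) (nu : Fin n → ℕ)
    (hnu : ∀ i, nu i ≤ lam i.castSucc) (c : cells nu) :
    ((c : Fin n × ℕ).1.castSucc, (c : Fin n × ℕ).2) ∈ cells lam := by
  obtain ⟨⟨i, c⟩, h⟩ := c
  rw [mem_cells_iff] at h ⊢
  exact lt_of_lt_of_le h (hnu i)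

theorem hasSub_ne {n : ℕ} (lam : Fin (n+1) → ℕ) (nu : Fin n → ℕ)
    (hnu : ∀ i, nu i ≤ lam i.castSucc) (T : cells lam → Fin (n+1)) (hT : HasSub lam T nu)
    (c : cells nu) : T ⟨_, cells_sub lam nu hnu c⟩ ≠ Fin.last n := by
  obtain ⟨⟨i, c⟩, h⟩ := c
  exact (hT i c _).2 ((mem_cells_iff _ _ _).1 h)

/-- restriction -/
noncomputable def restT {n : ℕ} (lam : Fin (n+1) → ℕ) (nu : Fin n → ℕ)
    (hnu : ∀ i, nu i ≤ lam i.castSucc) (T : cells lam → Fin (n+1)) (hT : HasSub lam T nu) :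
    cells nu → Fin n := fun c =>
  (T ⟨_, cells_sub lam nu hnu c⟩).castPred (hasSub_ne lam nu hnu T hT c)

theorem restT_ssyt {n : ℕ} (lam : Fin (n+1) → ℕ) (nu : Fin n → ℕ)
    (hnu : ∀ i, nu i ≤ lam i.castSucc) (T : cells lam → Fin (n+1)) (hT : HasSub lam T nu)
    (hS : IsSSYT lam T) : IsSSYT nu (restT lam nu hnu T hT) := by
  constructor
  · intro c d h1 h2
    exact Fin.castPred_le_castPred_iff.2 (hS.1 _ _ (by simp [h1]) h2)
  · intro c d h1 h2
    exact Fin.castPred_lt_castPred_iff.2 (hS.2 _ _ h1 (by simpa using h2))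

theorem last_row {n : ℕ} (lam : Fin (n+1) → ℕ) (hl : Antitone lam)
    (T : cells lam → Fin (n+1)) (hS : IsSSYT lam T) (c : ℕ) (h : (Fin.last n, c) ∈ cells lam) :
    T ⟨_, h⟩ = Fin.last n := by
  have := ssyt_row_le lam hl T hS n (Nat.lt_succ_self n) c h
  refine le_antisymm (Fin.le_last _) ?_
  rw [Fin.le_def]
  exact this

theorem extend_rest {n : ℕ} (lam : Fin (n+1) → ℕ) (nu : Fin n → ℕ) (hl : Antitone lam)
    (hnu : ∀ i, nu i ≤ lam i.castSucc) (T : cells lam → Fin (n+1)) (hT : HasSub lam T nu)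
    (hS : IsSSYT lam T) : extendT lam nu (restT lam nu hnu T hT) = T := by
  funext ⟨⟨i, c⟩, h⟩
  induction i using Fin.lastCases with
  | last => rw [extendT_last, last_row lam hl T hS]
  | cast i =>
    by_cases he : (i, c) ∈ cells nu
    · rw [extendT_of_mem _ _ _ _ _ _ he]
      simp [restT]
    · rw [extendT_of_not_mem _ _ _ _ _ h he]
      rw [mem_cells_iff] at he
      have := (hT i c h).not.2 he
      exact (not_not.1 this).symm

theorem rest_extend {n : ℕ} (lam : Fin (n+1) → ℕ) (nu : Fin n → ℕ)
    (hnu : ∀ i, nu i ≤ lam i.castSucc) (T : cells nu → Fin n)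
    (hT : HasSub lam (extendT lam nu T) nu) :
    restT lam nu hnu (extendT lam nu T) hT = T := by
  funext ⟨⟨i, c⟩, h⟩
  unfold restT
  apply Fin.castSucc_injective
  rw [Fin.castSucc_castPred]
  exact extendT_of_mem _ _ _ _ _ _ h

theorem tab_weight {R : Type*} [CommRing R] {n : ℕ} (lam : Fin (n+1) → ℕ) (nu : Fin n → ℕ)
    (hnu : ∀ i, nu i ≤ lam i.castSucc) (T : cells nu → Fin n) (x : Fin (n+1) → R) (y : ℤ → R) :
    ∏ c : cells lam, (x (extendT lam nu T c) + y (ysub (extendT lam nu T c) (c : Fin (n+1) × ℕ))) =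
    (fpw y (lam (Fin.last n)) (x (Fin.last n)) *
          ∏ i : Fin n, ∏ c ∈ Finset.Ico (nu i) (lam i.castSucc),
            (x (Fin.last n) + y ((n : ℤ) + 1 + c - (i : ℕ)))) *
      ∏ c : cells nu, (x (T c).castSucc + y (ysub (T c) (c : Fin n × ℕ))) := by
  let F : Fin (n+1) × ℕ → R := fun c => if h : c ∈ cells lam then
    (x (extendT lam nu T ⟨c, h⟩) + y (ysub (extendT lam nu T ⟨c, h⟩) c)) else 1
  let F' : Fin n × ℕ → R := fun c => if h : c ∈ cells nu then
    (x (T ⟨c, h⟩).castSucc + y (ysub (T ⟨c, h⟩) c)) else 1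
  have e1 : ∏ c : cells lam, (x (extendT lam nu T c) +
      y (ysub (extendT lam nu T c) (c : Fin (n+1) × ℕ))) = ∏ c : cells lam, F c := by
    refine Finset.prod_congr rfl fun c _ => ?_
    simp only [F]
    rw [dif_pos c.2]
  have e2 : ∏ c : cells nu, (x (T c).castSucc + y (ysub (T c) (c : Fin n × ℕ))) =
      ∏ c : cells nu, F' c := by
    refine Finset.prod_congr rfl fun c _ => ?_
    simp only [F']
    rw [dif_pos c.2]
  rw [e1, e2, prod_cells, prod_cells, Fin.prod_univ_castSucc, mul_comm, mul_assoc,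
    ← Finset.prod_mul_distrib]
  congr 1
  · unfold fpw
    refine Finset.prod_congr rfl fun c hc => ?_
    have hm := (mem_cells_iff lam (Fin.last n) c).2 (by simpa using hc)
    simp only [F]
    rw [dif_pos hm, extendT_last]
    simp only [ysub, Fin.val_last]
    congr 2
    ring
  · refine Finset.prod_congr rfl fun i _ => ?_
    rw [← Finset.prod_range_mul_prod_Ico _ (hnu i), mul_comm]
    congr 1
    · refine Finset.prod_congr rfl fun c hc => ?_
      rw [Finset.mem_Ico] at hc
      have hm := (mem_cells_iff lam i.castSucc c).2 hc.2
      have hm' := (mem_cells_iff nu i c).not.2 (by omega)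
      simp only [F]
      rw [dif_pos hm, extendT_of_not_mem _ _ _ _ _ hm hm']
      simp [ysub]
    · refine Finset.prod_congr rfl fun c hc => ?_
      rw [Finset.mem_range] at hc
      have hm := (mem_cells_iff lam i.castSucc c).2 (by have := hnu i; omega)
      have hm' := (mem_cells_iff nu i c).2 hc
      simp only [F, F']
      rw [dif_pos hm, dif_pos hm', extendT_of_mem _ _ _ _ _ hm hm']
      simp [ysub]

theorem tab_branch {R : Type*} [CommRing R] (y : ℤ → R) (n : ℕ) (lam : Fin (n+1) → ℕ)
    (hl : Antitone lam) (x : Fin (n+1) → R) :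
    tabS (n+1) lam x y =
      ∑ ν ∈ Fintype.piFinset (fun i : Fin n => Finset.Icc (lam i.succ) (lam i.castSucc)),
        (fpw y (lam (Fin.last n)) (x (Fin.last n)) *
          ∏ i : Fin n, ∏ c ∈ Finset.Ico (ν i) (lam i.castSucc),
            (x (Fin.last n) + y ((n : ℤ) + 1 + c - (i : ℕ)))) *
        tabS n ν (fun j => x j.castSucc) y := by
  have hle : ∀ ν ∈ Fintype.piFinset (fun i : Fin n => Finset.Icc (lam i.succ) (lam i.castSucc)),
      ∀ i, ν i ≤ lam i.castSucc := by
    intro ν hν i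
    simp only [Fintype.mem_piFinset, Finset.mem_Icc] at hν
    exact (hν i).2
  set W : (cells lam → Fin (n+1)) → R := fun T =>
    ∏ c : cells lam, (x (T c) + y (ysub (T c) (c : Fin (n+1) × ℕ))) with hW
  have h1 : tabS (n+1) lam x y = ∑ T ∈ Finset.univ.filter (IsSSYT lam),
      ∑ ν ∈ Fintype.piFinset (fun i : Fin n => Finset.Icc (lam i.succ) (lam i.castSucc)),
        if HasSub lam T ν then W T else 0 := by
    unfold tabS
    refine Finset.sum_congr rfl fun T hT => ?_
    rw [Finset.mem_filter] at hT
    obtain ⟨ν, hν, hs⟩ := hasSub_exists lam hl T hT.2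
    rw [Finset.sum_eq_single_of_mem ν hν, if_pos hs]
    intro ν' hν' hne
    rw [if_neg]
    intro hs'
    exact hne (hasSub_unique lam T _ _ (hle _ hν') (hle _ hν) hs' hs)
  rw [h1, Finset.sum_comm]
  refine Finset.sum_congr rfl fun ν hν => ?_
  rw [← Finset.sum_filter]
  unfold tabS
  rw [Finset.mul_sum]
  refine Finset.sum_bij' (fun T hT => restT lam ν (hle ν hν) T (Finset.mem_filter.1 hT).2)
    (fun T _ => extendT lam ν T) ?_ ?_ ?_ ?_ ?_
  · intro T hT
    simp only [Finset.mem_filter, Finset.mem_univ, true_and] at hT ⊢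
    exact restT_ssyt _ _ _ _ _ hT.1
  · intro T hT
    simp only [Finset.mem_filter, Finset.mem_univ, true_and] at hT ⊢
    exact ⟨extendT_ssyt _ _ hν _ hl hT, extendT_hasSub _ _ _⟩
  · intro T hT
    simp only [Finset.mem_filter, Finset.mem_univ, true_and] at hT
    exact extend_rest _ _ hl _ _ _ hT.1
  · intro T hT
    exact rest_extend _ _ _ _ _
  · intro T hT
    simp only [Finset.mem_filter, Finset.mem_univ, true_and] at hT
    rw [← tab_weight lam ν (hle ν hν)]
    rw [extend_rest _ _ hl _ _ _ hT.1]

/-- Vandermonde factor -/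
noncomputable def vdm {R : Type*} [CommRing R] : (n : ℕ) → (Fin n → R) → R
  | 0, _ => 1
  | n+1, x => (∏ j : Fin n, (x j.castSucc - x (Fin.last n))) * vdm n (fun j => x j.castSucc)

theorem bialternant {R : Type*} [CommRing R] (y : ℤ → R) (n : ℕ) (lam : Fin n → ℕ)
    (hl : Antitone lam) (x : Fin n → R) :
    Matrix.det (Matrix.of fun i j : Fin n => fpw y (lam i + (n - 1 - i)) (x j)) =
      vdm n x * tabS n lam x y := by
  induction n with
  | zero =>
    have : IsEmpty (cells lam) := ⟨fun c => c.1.1.elim0⟩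
    have h : Finset.univ.filter (IsSSYT lam) = {fun c => isEmptyElim c} := by
      ext T
      simp only [Finset.mem_filter, Finset.mem_univ, true_and, Finset.mem_singleton]
      exact ⟨fun _ => Subsingleton.elim _ _, fun _ => ⟨fun c => isEmptyElim c, fun c => isEmptyElim c⟩⟩
    unfold tabS
    rw [h]
    simp [vdm]
  | succ n ih =>
    have h := alt_branch y n lam hl x
    simp only [Nat.add_sub_cancel]
    rw [h, tab_branch y n lam hl x]
    simp only [vdm]
    rw [mul_assoc]
    congr 1
    rw [Finset.mul_sum]
    refine Finset.sum_congr rfl fun ν hν => ?_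
    rw [ih ν]
    · ring
    · simp only [Fintype.mem_piFinset, Finset.mem_Icc] at hν
      intro i j hij
      rcases eq_or_lt_of_le hij with h | h
      · rw [h]
      · refine (hν j).2.trans (le_trans (hl ?_) (hν i).1)
        rw [Fin.le_def]
        rw [Fin.lt_def] at h
        simpa using h

/-- product functional -/
noncomputable def prodFun {R : Type*} [CommRing R] (n : ℕ) (Λ : Fin n → (Polynomial R →ₗ[R] R)) :
    MvPolynomial (Fin n) R →ₗ[R] R :=
  (basisMonomials (Fin n) R).constr R (fun a => ∏ j, Λ j (Polynomial.X ^ (a j)))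

theorem prodFun_monomial {R : Type*} [CommRing R] (n : ℕ) (Λ : Fin n → (Polynomial R →ₗ[R] R))
    (a : Fin n →₀ ℕ) (r : R) :
    prodFun n Λ (monomial a r) = r * ∏ j, Λ j (Polynomial.X ^ (a j)) := by
  have : (monomial a r : MvPolynomial (Fin n) R) = r • basisMonomials (Fin n) R a := by
    rw [coe_basisMonomials, smul_monomial]; simp
  rw [this, map_smul, prodFun, Module.Basis.constr_basis, smul_eq_mul]

theorem prodFun_prod {R : Type*} [CommRing R] (n : ℕ) (Λ : Fin n → (Polynomial R →ₗ[R] R))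
    (p : Fin n → Polynomial R) :
    prodFun n Λ (∏ j, Polynomial.aeval (X j) (p j)) = ∏ j, Λ j (p j) := by
  have h1 : ∀ j, Polynomial.aeval (X j : MvPolynomial (Fin n) R) (p j) =
      ∑ a ∈ Finset.range ((p j).natDegree + 1), C ((p j).coeff a) * X j ^ a := by
    intro j
    rw [Polynomial.aeval_eq_sum_range]
    simp [MvPolynomial.smul_eq_C_mul]
  have h2 : ∀ j, Λ j (p j) =
      ∑ a ∈ Finset.range ((p j).natDegree + 1), (p j).coeff a * Λ j (Polynomial.X ^ a) := by
    intro j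
    conv_lhs => rw [(p j).as_sum_range_C_mul_X_pow]
    simp [← Polynomial.smul_eq_C_mul]
  simp only [h1, h2]
  rw [Finset.prod_univ_sum, Finset.prod_univ_sum, map_sum]
  refine Finset.sum_congr rfl fun a _ => ?_
  rw [Finset.prod_mul_distrib, Finset.prod_mul_distrib, ← map_prod]
  have : C (∏ j, (p j).coeff (a j)) * ∏ j, (X j : MvPolynomial (Fin n) R) ^ (a j) =
      monomial (Finsupp.equivFunOnFinite.symm a) (∏ j, (p j).coeff (a j)) := by
    rw [monomial_eq, Finsupp.prod_fintype _ _ (by simp)]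
    simp
  rw [this, prodFun_monomial]
  simp

theorem prodFun_det {R : Type*} [CommRing R] (n : ℕ) (Λ : Fin n → (Polynomial R →ₗ[R] R))
    (p : Fin n → Polynomial R) :
    prodFun n Λ (Matrix.det (Matrix.of fun i j => Polynomial.aeval (X j) (p i))) =
      Matrix.det (Matrix.of fun i j => Λ j (p i)) := by
  rw [Matrix.det_apply, Matrix.det_apply, map_sum]
  refine Finset.sum_congr rfl fun σ _ => ?_
  rw [Units.smul_def, Units.smul_def, map_zsmul]
  congr 1
  exact prodFun_prod n Λ (fun j => p (σ j))

/-- factorial power as a polynomial -/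
noncomputable def fpol (k : ℕ) : Polynomial (MvPolynomial ℤ ℤ) :=
  ∏ t ∈ Finset.range k, (Polynomial.X + Polynomial.C (X ((t : ℤ) + 1)))

theorem fpol_monic (k : ℕ) : (fpol k).Monic :=
  Polynomial.monic_prod_of_monic _ _ fun _ _ => Polynomial.monic_X_add_C _

theorem fpol_natDegree (k : ℕ) : (fpol k).natDegree = k := by
  unfold fpol
  rw [Polynomial.natDegree_prod_of_monic _ _ fun _ _ => Polynomial.monic_X_add_C _]
  simp

/-- the sequence of factorial powers -/
noncomputable def fseq : Polynomial.Sequence (MvPolynomial ℤ ℤ) where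
  elems' := fpol
  degree_eq' := fun i => by
    rw [Polynomial.degree_eq_natDegree (fpol_monic i).ne_zero, fpol_natDegree]

theorem fseq_unit (i : ℕ) : IsUnit (fseq i).leadingCoeff := by
  have : (fseq i).leadingCoeff = 1 := fpol_monic i
  rw [this]; exact isUnit_one

/-- coordinate functional -/
noncomputable def Lam (k : ℕ) : Polynomial (MvPolynomial ℤ ℤ) →ₗ[MvPolynomial ℤ ℤ] MvPolynomial ℤ ℤ :=
  (fseq.basis fseq_unit).coord k

theorem Lam_fpol (k l : ℕ) : Lam k (fpol l) = if l = k then 1 else 0 := by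
  have : fpol l = fseq.basis fseq_unit l := (fseq.basis_eq_self fseq_unit l).symm
  rw [this, Lam, Module.Basis.coord_apply, Module.Basis.repr_self, Finsupp.single_apply]

theorem fpol_coeff (i j : ℕ) : (fpol i).coeff j = eY i ((i : ℤ) - (j : ℤ)) := by
  unfold eY
  by_cases h : j ≤ i
  · have h0 : (0:ℤ) ≤ (i:ℤ) - j := by omega
    rw [if_pos h0, fpol, Finset.prod_X_add_C_coeff _ _ (by simpa using h)]
    have h1 : ((i:ℤ) - j).toNat = i - j := by omega
    have hinj : Function.Injective (fun k : ℕ => ((k : ℤ) + 1)) := by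
      intro a b hab
      simpa using hab
    rw [h1, Finset.card_range]
    have h2 : ((Finset.range i : Finset ℤ).image fun k => (k + 1 : ℤ)) =
      (Finset.range i).map ⟨_, hinj⟩ := by
        ext a
        simp
        exact exists_congr fun b => and_congr_right fun _ => by omega
    rw [h2, Finset.powersetCard_map, Finset.sum_map]
    refine Finset.sum_congr rfl fun s _ => ?_
    simp
  · rw [if_neg (by omega)]
    exact Polynomial.coeff_eq_zero_of_natDegree_lt (by rw [fpol_natDegree]; omega)

theorem lam_inv (N i k : ℕ) (hi : i < N) :
    ∑ j ∈ Finset.range N, eY i ((i : ℤ) - (j : ℤ)) * Lam k (Polynomial.X ^ j) =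
      if i = k then 1 else 0 := by
  rw [← Lam_fpol k i]
  conv_rhs => rw [(fpol i).as_sum_range_C_mul_X_pow' (n := N) (by rw [fpol_natDegree]; exact hi)]
  rw [map_sum]
  refine Finset.sum_congr rfl fun j _ => ?_
  rw [← Polynomial.smul_eq_C_mul, map_smul, smul_eq_mul, fpol_coeff]

theorem idx_inj {n : ℕ} (mu nu : Fin n → ℕ) (hmu : Antitone mu) (hnu : Antitone nu)
    (h : ∀ i : Fin n, ∃ j : Fin n, nu i + (n - 1 - i) = mu j + (n - 1 - j)) : nu = mu := by
  have sa : ∀ f : Fin n → ℕ, Antitone f → StrictAnti (fun i : Fin n => f i + (n - 1 - i)) := by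
    intro f hf i j hij
    have := hf hij.le
    rw [Fin.lt_def] at hij
    simp only
    omega
  have h1 := sa _ hmu
  have h2 := sa _ hnu
  have hsub : Finset.univ.image (fun i : Fin n => nu i + (n - 1 - i)) ⊆
      Finset.univ.image (fun i : Fin n => mu i + (n - 1 - i)) := by
    intro a ha
    simp only [Finset.mem_image, Finset.mem_univ, true_and] at ha ⊢
    obtain ⟨i, rfl⟩ := ha
    obtain ⟨j, hj⟩ := h i
    exact ⟨j, hj.symm⟩
  have heq := Finset.eq_of_subset_of_card_le hsub (by
    rw [Finset.card_image_of_injective _ h1.injective, Finset.card_image_of_injective _ h2.injective])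
  have hr : Set.range (fun i : Fin n => nu i + (n - 1 - i)) =
      Set.range (fun i : Fin n => mu i + (n - 1 - i)) := by
    have := congrArg (fun s : Finset ℕ => (s : Set ℕ)) heq
    simpa using this
  have hr' : Set.range ((fun i : Fin n => nu i + (n - 1 - i)) ∘ Fin.rev) =
      Set.range ((fun i : Fin n => mu i + (n - 1 - i)) ∘ Fin.rev) := by
    rw [Fin.rev_surjective.range_comp, Fin.rev_surjective.range_comp, hr]
  have h3 := (StrictMono.range_inj (h2.comp Fin.rev_strictAnti) (h1.comp Fin.rev_strictAnti)).1 hr'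
  funext i
  have := congrFun h3 i.rev
  simp only [Function.comp, Fin.rev_rev] at this
  omega

theorem det_delta {n : ℕ} (mu nu : Fin n → ℕ) (hmu : Antitone mu) (hnu : Antitone nu) :
    Matrix.det (Matrix.of fun i j : Fin n => Lam (mu j + (n - 1 - j)) (fpol (nu i + (n - 1 - i)))) =
      if nu = mu then 1 else 0 := by
  simp only [Lam_fpol]
  split_ifs with h
  · subst h
    refine Eq.trans ?_ (Matrix.det_one (n := Fin n))
    congr 1
    ext1 i j
    rw [Matrix.of_apply, Matrix.one_apply]
    congr 1
    rw [eq_iff_iff]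
    constructor
    · intro h
      by_contra hne
      rcases lt_or_gt_of_ne hne with h1 | h1
      · have := hnu h1.le
        rw [Fin.lt_def] at h1
        omega
      · have := hnu h1.le
        rw [Fin.lt_def] at h1
        omega
    · rintro rfl; rfl
  · have : ∃ i : Fin n, ∀ j : Fin n, nu i + (n - 1 - i) ≠ mu j + (n - 1 - j) := by
      by_contra hcon
      push Not at hcon
      exact h (idx_inj mu nu hmu hnu hcon)
    obtain ⟨i, hi⟩ := this
    apply Matrix.det_eq_zero_of_row_eq_zero i
    intro j
    rw [Matrix.of_apply, if_neg (hi j)]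

theorem d_eq_det (n : ℕ) (lam mu : Fin n → ℕ) (hlam : IsPartition lam) (hmu : IsPartition mu)
    (d : (Fin n → ℕ) →₀ MvPolynomial ℤ ℤ)
    (hdsupp : ∀ ν, d ν ≠ 0 → IsPartition ν)
    (hdexp : schurN n lam = d.sum fun ν p => rename Sum.inr p * factSchurN n ν) :
    d mu = Matrix.det (Matrix.of fun i j : Fin n =>
      Lam (mu j + (n - 1 - j)) (Polynomial.X ^ (lam i + (n - 1 - i)))) := by
  let φ : MvPolynomial (Fin n ⊕ ℤ) ℤ →+* MvPolynomial (Fin n) (MvPolynomial ℤ ℤ) :=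
    (sumRingEquiv ℤ (Fin n) ℤ : _ →+* _)
  have hφl : ∀ i, φ (X (Sum.inl i)) = X i := fun i => sumRingEquiv_X_inl _ _ _ i
  have hφr : ∀ i, φ (X (Sum.inr i)) = C (X i) := fun i => sumRingEquiv_X_inr _ _ _ i
  have hφC : ∀ p : MvPolynomial ℤ ℤ, φ (rename Sum.inr p) = C p := by
    intro p
    have : (φ.comp (rename (Sum.inr : ℤ → Fin n ⊕ ℤ) : MvPolynomial ℤ ℤ →ₐ[ℤ] _).toRingHom) =
        (C : MvPolynomial ℤ ℤ →+* MvPolynomial (Fin n) (MvPolynomial ℤ ℤ)) := by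
      apply MvPolynomial.ringHom_ext
      · intro r
        simp
      · intro i
        simp [hφr]
    exact RingHom.congr_fun this p
  let x : Fin n → MvPolynomial (Fin n) (MvPolynomial ℤ ℤ) := fun i => X i
  let y : ℤ → MvPolynomial (Fin n) (MvPolynomial ℤ ℤ) := fun i => C (X i)
  have h1 : φ (schurN n lam) = tabS n lam x (fun _ => 0) := by
    unfold schurN tabS
    simp [map_sum, map_prod, hφl, x]
  have h2 : ∀ ν, φ (factSchurN n ν) = tabS n ν x y := by
    intro ν
    unfold factSchurN tabS
    simp [map_sum, map_prod, hφl, hφr, x, y]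
  have h3 := congrArg φ hdexp
  rw [h1, Finsupp.sum, map_sum] at h3
  simp only [map_mul, hφC, h2] at h3
  have h4 := congrArg (fun q => vdm n x * q) h3
  simp only [Finset.mul_sum] at h4
  rw [← bialternant _ _ _ hlam] at h4
  have h5 : ∀ ν ∈ d.support, vdm n x * (C (d ν) * tabS n ν x y) =
      d ν • Matrix.det (Matrix.of fun i j : Fin n =>
        Polynomial.aeval (X j : MvPolynomial (Fin n) (MvPolynomial ℤ ℤ))
          (fpol (ν i + (n - 1 - i)))) := by
    intro ν hν
    rw [mul_left_comm, ← bialternant _ _ _ (hdsupp ν (Finsupp.mem_support_iff.1 hν)),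
      MvPolynomial.smul_eq_C_mul]
    congr 2
    ext1 i j
    simp [fpw, fpol, x, y, map_prod, MvPolynomial.algebraMap_eq]
  rw [Finset.sum_congr rfl h5] at h4
  have h6 : (Matrix.of fun i j : Fin n => fpw (fun _ => (0 : MvPolynomial (Fin n) (MvPolynomial ℤ ℤ))) (lam i + (n - 1 - i)) (x j)) =
      Matrix.of fun i j : Fin n =>
        Polynomial.aeval (X j : MvPolynomial (Fin n) (MvPolynomial ℤ ℤ))
          ((Polynomial.X : Polynomial (MvPolynomial ℤ ℤ)) ^ (lam i + (n - 1 - i))) := by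
    ext1 i j
    simp [fpw, x]
  rw [h6] at h4
  have h7 := congrArg (prodFun n fun j : Fin n => Lam (mu j + (n - 1 - j))) h4
  rw [prodFun_det, map_sum] at h7
  simp only [map_smul] at h7
  rw [h7, Finset.sum_congr rfl (fun ν hν => by
    rw [prodFun_det, det_delta mu ν hmu (hdsupp ν (Finsupp.mem_support_iff.1 hν))])]
  simp only [smul_eq_mul, mul_ite, mul_one, mul_zero, Finset.sum_ite_eq']
  split_ifs with h
  · rfl
  · exact Finsupp.notMem_support_iff.1 h

/-- column index in the complement -/
noncomputable def cidx (n m : ℕ) (lam : Fin n → ℕ) (k : Fin m) : ℕ :=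
  conjComp n m lam k.rev + (k : ℕ)

theorem cidx_eq (n m : ℕ) (lam : Fin n → ℕ) (k : Fin m) :
    cidx n m lam k = n - (Finset.univ.filter fun t : Fin n => (k : ℕ) < lam t).card + k := by
  unfold cidx conjComp
  congr 4
  ext t
  have : (k : ℕ) < m := k.2
  rw [Fin.val_rev]
  omega

theorem cidx_gt (n m : ℕ) (lam : Fin n → ℕ) (hl : Antitone lam) (k : Fin m) (i : Fin n)
    (h : lam i ≤ k) : lam i + (n - 1 - i) < cidx n m lam k := by
  rw [cidx_eq]
  have h1 : (Finset.univ.filter fun t : Fin n => (k : ℕ) < lam t).card ≤ (Finset.Iio i).card := by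
    apply Finset.card_le_card
    intro t ht
    simp only [Finset.mem_filter, Finset.mem_univ, true_and, Finset.mem_Iio] at ht ⊢
    by_contra hcon
    have := hl (not_lt.1 hcon)
    omega
  rw [Fin.card_Iio] at h1
  have := i.2
  omega

theorem cidx_lt (n m : ℕ) (lam : Fin n → ℕ) (hl : Antitone lam) (k : Fin m) (i : Fin n)
    (h : (k : ℕ) < lam i) : cidx n m lam k < lam i + (n - 1 - i) := by
  rw [cidx_eq]
  have h1 : (Finset.Iic i).card ≤ (Finset.univ.filter fun t : Fin n => (k : ℕ) < lam t).card := by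
    apply Finset.card_le_card
    intro t ht
    simp only [Finset.mem_filter, Finset.mem_univ, true_and, Finset.mem_Iic] at ht ⊢
    have := hl ht
    omega
  rw [Fin.card_Iic] at h1
  have := i.2
  omega

theorem cidx_strictMono (n m : ℕ) (lam : Fin n → ℕ) : StrictMono (cidx n m lam) := by
  intro k l hkl
  rw [cidx_eq, cidx_eq]
  have h1 : (Finset.univ.filter fun t : Fin n => (l : ℕ) < lam t).card ≤
      (Finset.univ.filter fun t : Fin n => (k : ℕ) < lam t).card := by
    apply Finset.card_le_card
    intro t ht
    simp only [Finset.mem_filter, Finset.mem_univ, true_and] at ht ⊢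
    rw [Fin.lt_def] at hkl
    omega
  rw [Fin.lt_def] at hkl
  omega

theorem ridx_strictAnti {n : ℕ} (lam : Fin n → ℕ) (hl : Antitone lam) :
    StrictAnti (fun i : Fin n => lam i + (n - 1 - i)) := by
  intro i j hij
  have := hl hij.le
  rw [Fin.lt_def] at hij
  simp only
  omega

/-- the map to Fin (n+m) -/
noncomputable def emap (n m : ℕ) (lam : Fin n → ℕ) (hm : ∀ i, lam i ≤ m) :
    Fin n ⊕ Fin m → Fin (n + m) :=
  Sum.elim (fun i => ⟨lam i + (n - 1 - i), by have := hm i; have := i.2; omega⟩)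
    (fun k => ⟨cidx n m lam k, by rw [cidx_eq]; have := k.2; omega⟩)

theorem emap_inj (n m : ℕ) (lam : Fin n → ℕ) (hl : Antitone lam) (hm : ∀ i, lam i ≤ m) :
    Function.Injective (emap n m lam hm) := by
  have hne : ∀ (i : Fin n) (k : Fin m), lam i + (n - 1 - i) ≠ cidx n m lam k := by
    intro i k
    rcases le_or_gt (lam i) k with h | h
    · exact (cidx_gt n m lam hl k i h).ne
    · exact (cidx_lt n m lam hl k i h).ne'
  rintro (i | k) (j | l) h <;> simp only [emap, Sum.elim_inl, Sum.elim_inr, Fin.mk.injEq] at h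
  · rw [(ridx_strictAnti lam hl).injective h]
  · exact absurd h (hne _ _)
  · exact absurd h.symm (hne _ _)
  · rw [(cidx_strictMono n m lam).injective h]

/-- the equivalence -/
noncomputable def eqv (n m : ℕ) (lam : Fin n → ℕ) (hl : Antitone lam) (hm : ∀ i, lam i ≤ m) :
    Fin n ⊕ Fin m ≃ Fin (n + m) :=
  Equiv.ofBijective (emap n m lam hm)
    ((Fintype.bijective_iff_injective_and_card _).2 ⟨emap_inj n m lam hl hm, by simp⟩)

theorem prod_sgn (m L : ℕ) (hL : L ≤ m) :
    (∏ k : Fin m, (if L ≤ (k : ℕ) then (1 : ℤˣ) else -1)) = (-1) ^ L := by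
  rw [Fin.prod_univ_eq_prod_range (fun k => if L ≤ k then (1 : ℤˣ) else -1) m,
    ← Finset.prod_range_mul_prod_Ico _ hL]
  rw [Finset.prod_congr rfl (g := fun _ => (-1 : ℤˣ)) (fun k hk => if_neg (by simpa using hk)),
    Finset.prod_congr rfl (g := fun _ => (1 : ℤˣ)) (s₁ := Finset.Ico L m)
      (fun k hk => if_pos (by rw [Finset.mem_Ico] at hk; exact hk.1))]
  simp

theorem sign_eqv (n m : ℕ) (lam : Fin n → ℕ) (hl : Antitone lam) (hm : ∀ i, lam i ≤ m) :
    Equiv.Perm.sign (finSumFinEquiv.symm.trans (eqv n m lam hl hm)) =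
      (∏ j : Fin n, ∏ i : Fin n, if i < j then (-1 : ℤˣ) else 1) * (-1) ^ (∑ i, lam i) := by
  rw [Equiv.Perm.sign_eq_prod_prod_Iio]
  have h0 : ∀ (j : Fin (n+m)) (g : Fin (n+m) → ℤˣ), ∏ i ∈ Finset.Iio j, g i =
      ∏ i, if i < j then g i else 1 := by
    intro j g
    rw [← Finset.prod_filter]
    congr 1
    ext i
    simp
  have hl1 : ∀ i : Fin n, (finSumFinEquiv.symm.trans (eqv n m lam hl hm)) (Fin.castAdd m i) =
      emap n m lam hm (Sum.inl i) := by
    intro i; simp [eqv]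
  have hr1 : ∀ i : Fin m, (finSumFinEquiv.symm.trans (eqv n m lam hl hm)) (Fin.natAdd n i) =
      emap n m lam hm (Sum.inr i) := by
    intro i; simp [eqv]
  simp only [h0]
  rw [Fin.prod_univ_add]
  congr 1
  · refine Finset.prod_congr rfl fun j _ => ?_
    rw [Fin.prod_univ_add]
    rw [Finset.prod_congr rfl (g := fun _ => (1 : ℤˣ)) (s₁ := (Finset.univ : Finset (Fin m)))]
    · rw [Finset.prod_const_one, mul_one]
      refine Finset.prod_congr rfl fun i _ => ?_
      by_cases hij : i < j
      · rw [if_pos hij, if_pos (show Fin.castAdd m i < Fin.castAdd m j from hij), hl1, hl1, if_neg]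
        have := ridx_strictAnti lam hl hij
        simp only [emap, Sum.elim_inl, Fin.mk_lt_mk]
        exact not_lt.2 this.le
      · rw [if_neg hij, if_neg (show ¬ Fin.castAdd m i < Fin.castAdd m j from hij)]
    · intro k _
      rw [if_neg]
      rw [Fin.lt_def, Fin.val_natAdd, Fin.val_castAdd]
      have := j.2
      omega
  · rw [← Finset.prod_pow_eq_pow_sum, ← Finset.prod_congr rfl (fun i _ => prod_sgn m (lam i) (hm i))]
    refine Eq.trans ?_ Finset.prod_comm
    refine Finset.prod_congr rfl fun k _ => ?_
    rw [Fin.prod_univ_add]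
    rw [Finset.prod_congr rfl (g := fun _ => (1 : ℤˣ)) (s₁ := (Finset.univ : Finset (Fin m)))]
    · rw [Finset.prod_const_one, mul_one]
      refine Finset.prod_congr rfl fun i _ => ?_
      rw [if_pos (by rw [Fin.lt_def, Fin.val_natAdd, Fin.val_castAdd]; have := i.2; omega), hl1, hr1]
      by_cases h : lam i ≤ k
      · rw [if_pos h, if_pos]
        exact cidx_gt n m lam hl k i h
      · rw [if_neg h, if_neg]
        exact not_lt.2 (cidx_lt n m lam hl k i (not_le.1 h)).le
    · intro l _
      by_cases hlk : l < k
      · rw [if_pos (show Fin.natAdd n l < Fin.natAdd n k from Nat.add_lt_add_left hlk n), hr1, hr1, if_pos]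
        exact cidx_strictMono n m lam hlk
      · rw [if_neg (show ¬ Fin.natAdd n l < Fin.natAdd n k from fun h => hlk (Nat.lt_of_add_lt_add_left h))]

theorem jacobi {R : Type*} [CommRing R] {n m : ℕ} (P Q : Matrix (Fin n ⊕ Fin m) (Fin n ⊕ Fin m) R)
    (h : P * Q = 1) : P.det * Q.toBlocks₁₁.det = P.toBlocks₂₂.det := by
  have hb : P * Matrix.fromBlocks Q.toBlocks₁₁ 0 Q.toBlocks₂₁ 1 =
      Matrix.fromBlocks 1 P.toBlocks₁₂ 0 P.toBlocks₂₂ := by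
    have h' := h
    rw [← Matrix.fromBlocks_toBlocks P, ← Matrix.fromBlocks_toBlocks Q, Matrix.fromBlocks_multiply,
      ← Matrix.fromBlocks_one, Matrix.fromBlocks_inj] at h'
    conv_lhs => rw [← Matrix.fromBlocks_toBlocks P]
    rw [Matrix.fromBlocks_multiply, h'.1, h'.2.2.1]
    simp
  have := congrArg Matrix.det hb
  rw [Matrix.det_mul, Matrix.det_fromBlocks_zero₁₂, Matrix.det_fromBlocks_zero₂₁] at this
  simpa using this

/-- equation (5) in the paper:
`d_{λ,n}^μ(y) = (-1)^{|λ|+|μ|} det(A_{I_{μ^c}, I_{λ^c}})`, where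
`A = (e_{i-j}(y_1,…,y_i))_{0 ≤ i,j ≤ N-1}` and the submatrix has rows indexed by
`I_{μ^c}` and columns by `I_{λ^c}`, each listed in increasing order.  The `k`-th
smallest element of `I_{ν^c} = {ν^c_i + m - i}` (for `k = 0, …, m-1`, 0-based) is
`ν^c_{m-1-k} + k` (0-based indexing of `ν^c`). -/
theorem d_coeff_eq_sign_times_minor (n m : ℕ) (hn : 1 ≤ n) (hm : 1 ≤ m)
    (lam mu : Fin n → ℕ) (hlam : IsPartition lam) (hmu : IsPartition mu)
    (hlamm : ∀ i, lam i ≤ m) (hmum : ∀ i, mu i ≤ m)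
    (d : (Fin n → ℕ) →₀ MvPolynomial ℤ ℤ)
    (hdsupp : ∀ ν, d ν ≠ 0 → IsPartition ν)
    (hdexp : schurN n lam = d.sum fun ν p => rename Sum.inr p * factSchurN n ν) :
    d mu = (-1 : MvPolynomial ℤ ℤ) ^ (∑ i, lam i + ∑ i, mu i) *
      Matrix.det (Matrix.of fun k l : Fin m =>
        eY (conjComp n m mu k.rev + (k : ℕ))
          (((conjComp n m mu k.rev + (k : ℕ) : ℕ) : ℤ)
            - ((conjComp n m lam l.rev + (l : ℕ) : ℕ) : ℤ))) := by
  rw [d_eq_det n lam mu hlam hmu d hdsupp hdexp]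
  let A : Matrix (Fin (n+m)) (Fin (n+m)) (MvPolynomial ℤ ℤ) :=
    Matrix.of fun i j => eY i (((i : ℕ) : ℤ) - ((j : ℕ) : ℤ))
  let B : Matrix (Fin (n+m)) (Fin (n+m)) (MvPolynomial ℤ ℤ) :=
    Matrix.of fun i j => Lam j (Polynomial.X ^ (i : ℕ))
  have hAB : A * B = 1 := by
    ext1 i k
    rw [Matrix.mul_apply, Matrix.one_apply]
    simp only [A, B, Matrix.of_apply]
    rw [Fin.sum_univ_eq_sum_range (fun j => eY i (((i : ℕ) : ℤ) - (j : ℤ)) *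
      Lam k (Polynomial.X ^ j)) (n+m), lam_inv _ _ _ i.2]
    simp only [Fin.ext_iff]
  have hA : A.det = 1 := by
    rw [Matrix.det_of_isLowerTriangular]
    · apply Finset.prod_eq_one
      intro i _
      simp only [A, Matrix.of_apply]
      rw [← fpol_coeff]
      have := fpol_monic i
      rw [Polynomial.Monic, Polynomial.leadingCoeff, fpol_natDegree] at this
      exact this
    · intro i j hij
      have hij' : (i : ℕ) < j := hij
      simp only [A, Matrix.of_apply]
      rw [eY, if_neg (by omega)]
  let eL := eqv n m lam hlam hlamm
  let eM := eqv n m mu hmu hmum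
  have hPQ : A.submatrix eM eL * B.submatrix eL eM = 1 := by
    rw [Matrix.submatrix_mul_equiv, hAB, Matrix.submatrix_one_equiv]
  have hJ := jacobi _ _ hPQ
  have hs : (A.submatrix eM eL).det =
      (-1 : MvPolynomial ℤ ℤ) ^ (∑ i, lam i + ∑ i, mu i) := by
    have e1 : A.submatrix eM eL =
        ((A.submatrix (finSumFinEquiv.symm.trans eM) id).submatrix id
          (finSumFinEquiv.symm.trans eL)).submatrix finSumFinEquiv finSumFinEquiv := by
      ext1 a b
      simp
    rw [e1, Matrix.det_submatrix_equiv_self, Matrix.det_permute', Matrix.det_permute, hA,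
      sign_eqv n m lam hlam hlamm, sign_eqv n m mu hmu hmum, mul_one, ← Int.cast_mul, ← Units.val_mul, mul_mul_mul_comm,
      Int.units_mul_self, one_mul, ← pow_add]
    simp
  rw [hs] at hJ
  have hsq : ((-1 : MvPolynomial ℤ ℤ) ^ (∑ i, lam i + ∑ i, mu i)) *
      ((-1 : MvPolynomial ℤ ℤ) ^ (∑ i, lam i + ∑ i, mu i)) = 1 := by
    rw [← mul_pow]; simp
  have hgoal : Matrix.det (Matrix.of fun k l : Fin m =>
        eY (conjComp n m mu k.rev + (k : ℕ))
          (((conjComp n m mu k.rev + (k : ℕ) : ℕ) : ℤ)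
            - ((conjComp n m lam l.rev + (l : ℕ) : ℕ) : ℤ))) =
      (A.submatrix eM eL).toBlocks₂₂.det := rfl
  have hl2 : Matrix.det (Matrix.of fun i j : Fin n =>
      Lam (mu j + (n - 1 - j)) (Polynomial.X ^ (lam i + (n - 1 - i)))) =
      (B.submatrix eL eM).toBlocks₁₁.det := rfl
  rw [hgoal, hl2, ← hJ, ← mul_assoc, hsq, one_mul]
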